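/- arXiv:2305.17133 — 2 statements merged into one kernel-verified Lean document; each statement's English description precedes it below -/
import Mathlib

section
/- Let γ : I → ℝ³ be a smooth non-degenerate curve with γ^{(j)}(0) = e_j for 1 ≤ j ≤ 3 and γ₃(0) > 0, and let χ ∈ C^∞(ℝ) be non-negative, supported in the interior of I, with χ(0) > 0. Let 1 ≤ p, q ≤ ∞. If there exists a constant C such that ‖M_γ f‖_{L^q(ℝ³)} ≤ C ‖f‖_{L^p(ℝ³)} for all bounded, compactly supported measurable functions f on ℝ³, then 6/p ≤ 1 + 3/q. -/
open MeasureTheory Real Set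
open scoped ENNReal ContDiff

noncomputable section

abbrev E3 : Type := EuclideanSpace ℝ (Fin 3)

/-- The interval `I = [-1,1]`. -/
def I1 : Set ℝ := Set.Icc (-1 : ℝ) 1

/-- Determinant of three vectors in `ℝ³`. -/
def det3 (v w z : E3) : ℝ :=
  Matrix.det !![v 0, w 0, z 0; v 1, w 1, z 1; v 2, w 2, z 2]

/-- The averaging operator `A_t f(x) = ∫ f(x - tγ(s)) χ(s) ds`. -/
def avgOp (γ : ℝ → E3) (χ : ℝ → ℝ) (t : ℝ) (f : E3 → ℝ) (x : E3) : ℝ :=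
  ∫ s : ℝ, f (x - t • γ s) * χ s

/-- The local maximal function `M_γ f(x) = sup_{1 ≤ t ≤ 2} |A_t f(x)|`. -/
def maxOp (γ : ℝ → E3) (χ : ℝ → ℝ) (f : E3 → ℝ) (x : E3) : ℝ :=
  ⨆ t : Set.Icc (1:ℝ) 2, |avgOp γ χ t f x|

lemma knapp_taylor (γ : ℝ → E3) (hγ : ContDiff ℝ (⊤ : ℕ∞) γ)
    (hγ1 : iteratedDeriv 1 γ 0 = EuclideanSpace.single 0 1)
    (hγ2 : iteratedDeriv 2 γ 0 = EuclideanSpace.single 1 1) :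
    ∃ K : ℝ, 0 ≤ K ∧ ∀ s ∈ Icc (0:ℝ) 1, |γ s 0 - γ 0 0| ≤ K * s ∧
      |γ s 1 - γ 0 1| ≤ K * s ^ 2 ∧ |γ s 2 - γ 0 2| ≤ K * s ^ 3 := by
  have hc : ∀ n : ℕ, ContDiff ℝ n γ := fun n => hγ.of_le (by exact_mod_cast le_top)
  obtain ⟨C, hC⟩ := exists_taylor_mean_remainder_bound (f := γ) (n := 2) (zero_le_one' ℝ)
    (by exact_mod_cast (hc 3).contDiffOn)
  have h1 : iteratedDerivWithin 1 γ (Icc (0:ℝ) 1) 0 = EuclideanSpace.single 0 1 := by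
    rw [iteratedDerivWithin_eq_iteratedDeriv (uniqueDiffOn_Icc one_pos)
      (by exact_mod_cast (hc 1).contDiffAt) (by simp), hγ1]
  have h2 : iteratedDerivWithin 2 γ (Icc (0:ℝ) 1) 0 = EuclideanSpace.single 1 1 := by
    rw [iteratedDerivWithin_eq_iteratedDeriv (uniqueDiffOn_Icc one_pos)
      (by exact_mod_cast (hc 2).contDiffAt) (by simp), hγ2]
  refine ⟨1 + |C|, by positivity, fun s hs => ?_⟩
  have h := hC s hs
  rw [taylorWithinEval_succ, taylorWithinEval_succ, taylor_within_zero_eval] at h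
  norm_num [h1, h2] at h
  have h' : ∀ i, |(γ s - (γ 0 + s • EuclideanSpace.single 0 1 +
      (1/2 * s^2) • EuclideanSpace.single 1 1) : E3) i| ≤ |C| * s ^ 3 := by
    intro i
    have := PiLp.norm_apply_le (γ s - (γ 0 + s • EuclideanSpace.single 0 1 +
      (1/2 * s^2) • EuclideanSpace.single 1 1) : E3) i
    rw [Real.norm_eq_abs] at this
    refine this.trans ((le_of_eq ?_).trans (h.trans ?_))
    · norm_num
    · have := hs.1
      gcongr
      exact le_abs_self C
  obtain ⟨hs0, hs1⟩ := hs
  have hs2 : s ^ 2 ≤ s := by nlinarith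
  have hs3 : s ^ 3 ≤ s ^ 2 := by nlinarith [sq_nonneg s]
  have ha := abs_nonneg C
  have e0 := h' 0
  have e1 := h' 1
  have e2 := h' 2
  simp at e0 e1 e2
  have m1 : |C| * s ^ 3 ≤ |C| * s ^ 2 := by gcongr
  have m2 : |C| * s ^ 2 ≤ |C| * s := by gcongr
  have m3 : 0 ≤ s ^ 3 := by positivity
  rw [abs_le] at e0 e1 e2
  refine ⟨?_, ?_, ?_⟩ <;> rw [abs_le] <;> constructor <;> nlinarith

def kbox (B r : ℝ) : Set E3 :=
  WithLp.ofLp ⁻¹' Icc (![-(B * r), -(B * r ^ 2), -(B * r ^ 3)] : Fin 3 → ℝ)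
    ![B * r, B * r ^ 2, B * r ^ 3]

lemma mem_kbox {B r : ℝ} {y : E3} : y ∈ kbox B r ↔
    |y 0| ≤ B * r ∧ |y 1| ≤ B * r ^ 2 ∧ |y 2| ≤ B * r ^ 3 := by
  simp only [kbox, mem_preimage, mem_Icc, Pi.le_def, Fin.forall_fin_succ, abs_le]
  simp
  tauto

lemma isCompact_kbox (B r : ℝ) : IsCompact (kbox B r) :=
  (EuclideanSpace.equiv (Fin 3) ℝ).toHomeomorph.isCompact_preimage.2 isCompact_Icc

lemma vol_ofLp (s : Set (Fin 3 → ℝ)) (hs : MeasurableSet s) :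
    volume ((WithLp.ofLp : E3 → Fin 3 → ℝ) ⁻¹' s) = volume s :=
  (PiLp.volume_preserving_ofLp (Fin 3)).measure_preimage hs.nullMeasurableSet

lemma vol_kbox {B r : ℝ} (hB : 0 ≤ B) (hr : 0 ≤ r) :
    volume (kbox B r) = ENNReal.ofReal (8 * B ^ 3 * r ^ 6) := by
  rw [kbox, vol_ofLp _ measurableSet_Icc, Real.volume_Icc_pi, Fin.prod_univ_three]
  simp only [Matrix.cons_val]
  rw [← ENNReal.ofReal_mul (by nlinarith [mul_nonneg hB hr]),
    ← ENNReal.ofReal_mul]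
  · congr 1; ring
  · have : 0 ≤ B * r := by positivity
    have : 0 ≤ B * r ^ 2 := by positivity
    apply mul_nonneg <;> linarith

def kset (a b g r : ℝ) : Set E3 :=
  WithLp.ofLp ⁻¹' ((Matrix.toLin' !![1, 0, -a; 0, 1, -b; 0, 0, 1]) ⁻¹'
    Icc (![-r, -r ^ 2, g] : Fin 3 → ℝ) ![r, r ^ 2, 2 * g])

lemma mem_kset {a b g r : ℝ} {x : E3} : x ∈ kset a b g r ↔
    |x 0 - a * x 2| ≤ r ∧ |x 1 - b * x 2| ≤ r ^ 2 ∧ g ≤ x 2 ∧ x 2 ≤ 2 * g := by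
  simp only [kset, mem_preimage, mem_Icc, Pi.le_def, Fin.forall_fin_succ, abs_le]
  simp [Matrix.mulVec, dotProduct, Fin.sum_univ_succ, ← sub_eq_add_neg]
  tauto

lemma measurableSet_kset (a b g r : ℝ) : MeasurableSet (kset a b g r) := by
  apply (PiLp.volume_preserving_ofLp (Fin 3)).measurable
  exact (LinearMap.continuous_of_finiteDimensional _).measurable measurableSet_Icc

lemma vol_kset {a b g r : ℝ} (hg : 0 ≤ g) (hr : 0 ≤ r) :
    volume (kset a b g r) = ENNReal.ofReal (4 * g * r ^ 3) := by
  have hdet : LinearMap.det (Matrix.toLin' !![1, 0, -a; 0, 1, -b; 0, 0, 1]) = 1 := by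
    rw [LinearMap.det_toLin', Matrix.det_fin_three]; simp
  rw [kset, vol_ofLp _
    ((LinearMap.continuous_of_finiteDimensional _).measurable measurableSet_Icc),
    Measure.addHaar_preimage_linearMap _ (by rw [hdet]; exact one_ne_zero), hdet,
    Real.volume_Icc_pi, Fin.prod_univ_three]
  simp only [Matrix.cons_val]
  rw [← ENNReal.ofReal_mul (by linarith), ← ENNReal.ofReal_mul, ← ENNReal.ofReal_mul (by simp)]
  · congr 1; simp; ring
  · have : 0 ≤ r ^ 2 := by positivity
    apply mul_nonneg <;> linarith

/-- Pointwise lower bound. -/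
lemma knapp_lower (γ : ℝ → E3) (hγ : Continuous γ) (χ : ℝ → ℝ) (hχ : Continuous χ)
    (hχpos : ∀ s, 0 ≤ χ s) (hχsupp : Function.support χ ⊆ Set.Ioo (-1 : ℝ) 1)
    (K : ℝ) (hK : 0 ≤ K) (hT : ∀ s ∈ Icc (0:ℝ) 1, |γ s 0 - γ 0 0| ≤ K * s ∧
      |γ s 1 - γ 0 1| ≤ K * s ^ 2 ∧ |γ s 2 - γ 0 2| ≤ K * s ^ 3)
    (hg : 0 < γ 0 2) (c r : ℝ) (hr0 : 0 < r) (hr1 : r ≤ 1)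
    (hc : ∀ s ∈ Icc 0 r, c ≤ χ s) (x : E3)
    (hx : x ∈ kset (γ 0 0 / γ 0 2) (γ 0 1 / γ 0 2) (γ 0 2) r) :
    c * r ≤ maxOp γ χ ((kbox (1 + 2 * K) r).indicator fun _ => 1) x := by
  rw [mem_kset] at hx
  obtain ⟨hx0, hx1, hx2, hx3⟩ := hx
  set f : E3 → ℝ := (kbox (1 + 2 * K) r).indicator fun _ => 1 with hf
  have hfm : Measurable f := measurable_const.indicator (isCompact_kbox _ _).measurableSet
  have hf0 : ∀ y, 0 ≤ f y := fun y => indicator_nonneg (fun _ _ => zero_le_one) y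
  have hf1 : ∀ y, f y ≤ 1 := fun y => indicator_le_self' (fun _ _ => zero_le_one) y
  have hχi : Integrable χ := by
    apply hχ.integrable_of_hasCompactSupport
    exact HasCompactSupport.of_support_subset_isCompact isCompact_Icc
      (hχsupp.trans Ioo_subset_Icc_self)
  have hle : ∀ t s : ℝ, ‖f (x - t • γ s) * χ s‖ ≤ χ s := by
    intro t s
    rw [Real.norm_eq_abs, abs_of_nonneg (mul_nonneg (hf0 _) (hχpos s))]
    exact mul_le_of_le_one_left (hχpos s) (hf1 _)
  have hbdd : BddAbove (range fun t : Icc (1:ℝ) 2 => |avgOp γ χ t f x|) := by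
    refine ⟨∫ s, χ s, ?_⟩
    rintro _ ⟨t, rfl⟩
    exact norm_integral_le_of_norm_le hχi (Filter.Eventually.of_forall (hle t))
  have ht : x 2 / γ 0 2 ∈ Icc (1:ℝ) 2 := by
    constructor
    · rwa [le_div_iff₀ hg, one_mul]
    · rwa [div_le_iff₀ hg]
  refine le_trans ?_ (le_ciSup hbdd ⟨_, ht⟩)
  refine le_trans ?_ (le_abs_self _)
  set t := x 2 / γ 0 2 with htd
  have hint : Integrable fun s => f (x - t • γ s) * χ s := by
    refine hχi.mono' ?_ (Filter.Eventually.of_forall (hle t))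
    refine Measurable.aestronglyMeasurable ?_
    exact (hfm.comp (by fun_prop : Continuous fun s => x - t • γ s).measurable).mul hχ.measurable
  have key : ∫ s, (Icc 0 r).indicator (fun _ => c) s = c * r := by
    rw [integral_indicator measurableSet_Icc]
    simp [hr0.le, mul_comm]
  rw [← key]
  refine integral_mono ?_ hint ?_
  · exact (integrable_indicator_iff measurableSet_Icc).2 (integrableOn_const (by simp))
  intro s
  by_cases hs : s ∈ Icc 0 r
  · simp only [indicator_of_mem hs]
    have hmem : x - t • γ s ∈ kbox (1 + 2 * K) r := by
      obtain ⟨k0, k1, k2⟩ := hT s ⟨hs.1, hs.2.trans hr1⟩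
      have hs0 := hs.1
      have hsr := hs.2
      have p0 : K * s ≤ K * r := by gcongr
      have p1 : K * s ^ 2 ≤ K * r ^ 2 := by gcongr
      have p2 : K * s ^ 3 ≤ K * r ^ 3 := by gcongr
      have q : ∀ u v w d R : ℝ, |u| ≤ R → |v| ≤ d → d ≤ K * R → w = u - t * v →
          |w| ≤ (1 + 2 * K) * R := by
        rintro u v w d R hu hv hd rfl
        calc |u - t * v| ≤ |u| + |t * v| := abs_sub _ _
          _ = |u| + t * |v| := by rw [abs_mul, abs_of_nonneg (a := t) (by linarith [ht.1])]
          _ ≤ R + 2 * (K * R) := by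
            have : t * |v| ≤ 2 * (K * R) :=
              mul_le_mul ht.2 (hv.trans hd) (abs_nonneg _) (by norm_num)
            linarith
          _ = _ := by ring
      rw [mem_kbox]
      refine ⟨q _ _ _ _ _ hx0 k0 p0 ?_, q _ _ _ _ _ hx1 k1 p1 ?_,
        q 0 _ _ _ _ (by rw [abs_zero]; positivity) k2 p2 ?_⟩
      · simp [htd]; ring
      · simp [htd]; ring
      · simp [htd]; field_simp; ring
    rw [hf, indicator_of_mem hmem, one_mul]
    exact hc s hs
  · simp only [indicator_of_notMem hs]
    exact mul_nonneg (hf0 _) (hχpos s)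

lemma knapp_exponents (α β c a b C δ : ℝ) (hc : 0 < c) (ha : 0 < a) (hb : 0 < b) (hδ : 0 < δ)
    (h : ∀ r, 0 < r → r ≤ δ → c * r * (a * r ^ 3) ^ β ≤ C * (b * r ^ 6) ^ α) :
    6 * α ≤ 1 + 3 * β := by
  by_contra! hlt
  set e := 6 * α - (1 + 3 * β) with he
  have hepos : 0 < e := by linarith
  have hlim : Filter.Tendsto (fun r : ℝ => C * b ^ α * r ^ e) (nhdsWithin 0 (Ioi 0))
      (nhds (C * b ^ α * 0)) := by
    apply Filter.Tendsto.const_mul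
    have := (Real.continuousAt_rpow_const 0 e (Or.inr hepos.le)).tendsto
    rw [Real.zero_rpow hepos.ne'] at this
    exact this.mono_left nhdsWithin_le_nhds
  have hge : c * a ^ β ≤ C * b ^ α * 0 := by
    refine ge_of_tendsto hlim ?_
    filter_upwards [Ioc_mem_nhdsGT hδ] with r hr
    have hr0 := hr.1
    have h1 := h r hr.1 hr.2
    rw [Real.mul_rpow ha.le (by positivity), Real.mul_rpow hb.le (by positivity),
      ← Real.rpow_natCast r 3, ← Real.rpow_natCast r 6, ← Real.rpow_mul hr0.le,
      ← Real.rpow_mul hr0.le] at h1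
    push_cast at h1
    have h2 : r ^ (6 * α) = r ^ e * (r * r ^ (3 * β)) := by
      nth_rewrite 3 [← Real.rpow_one r]
      rw [← Real.rpow_add hr0, ← Real.rpow_add hr0]
      congr 1; rw [he]; ring
    rw [h2] at h1
    have h3 : 0 < r * r ^ (3 * β) := by positivity
    refine le_of_mul_le_mul_right ?_ h3
    calc _ = c * r * (a ^ β * r ^ (3 * β)) := by ring
      _ ≤ _ := h1
      _ = _ := by ring
  have : 0 < c * a ^ β := by positivity
  linarith

/-- the Knapp example necessary condition `6/p ≤ 1 + 3/q`. -/
theorem knapp_necessary_condition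
    (γ : ℝ → E3) (hγ : ContDiff ℝ (⊤ : ℕ∞) γ)
    (c₀ : ℝ) (hc₀ : 0 < c₀)
    (hnondeg : ∀ s ∈ I1,
      c₀ ≤ |det3 (iteratedDeriv 1 γ s) (iteratedDeriv 2 γ s) (iteratedDeriv 3 γ s)|)
    (hγ1 : iteratedDeriv 1 γ 0 = EuclideanSpace.single 0 1)
    (hγ2 : iteratedDeriv 2 γ 0 = EuclideanSpace.single 1 1)
    (hγ3 : iteratedDeriv 3 γ 0 = EuclideanSpace.single 2 1)
    (hγ30 : 0 < γ 0 2)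
    (χ : ℝ → ℝ) (hχsm : ContDiff ℝ (⊤ : ℕ∞) χ) (hχpos : ∀ s, 0 ≤ χ s)
    (hχsupp : Function.support χ ⊆ Set.Ioo (-1 : ℝ) 1) (hχ0 : 0 < χ 0)
    (p q : ℝ≥0∞) (hp : 1 ≤ p) (hq : 1 ≤ q)
    (C : ℝ) (hbound : ∀ f : E3 → ℝ, Measurable f → HasCompactSupport f →
      (∃ B : ℝ, ∀ x, |f x| ≤ B) →
      eLpNorm (maxOp γ χ f) q volume ≤ ENNReal.ofReal C * eLpNorm f p volume) :
    6 / p ≤ 1 + 3 / q := by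
  obtain ⟨K, hK, hT⟩ := knapp_taylor γ hγ hγ1 hγ2
  have hχc := hχsm.continuous
  obtain ⟨δ, hδ, hδχ⟩ : ∃ δ > 0, ∀ s ∈ Icc 0 δ, χ 0 / 2 ≤ χ s := by
    have h1 : ∀ᶠ s in nhds (0:ℝ), χ 0 / 2 < χ s :=
      hχc.continuousAt.eventually (lt_mem_nhds (by linarith))
    obtain ⟨ε, hε, h2⟩ := Metric.eventually_nhds_iff.1 h1
    refine ⟨ε / 2, by positivity, fun s hs => (h2 ?_).le⟩
    rw [Real.dist_eq, sub_zero, abs_of_nonneg hs.1]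
    linarith [hs.2]
  have hp0 : p ≠ 0 := (zero_lt_one.trans_le hp).ne'
  have hq0 : q ≠ 0 := (zero_lt_one.trans_le hq).ne'
  have hreal : 6 * (1 / p.toReal) ≤ 1 + 3 * (1 / q.toReal) := by
    refine knapp_exponents (1 / p.toReal) (1 / q.toReal) (χ 0 / 2) (4 * γ 0 2)
      (8 * (1 + 2 * K) ^ 3) (max C 0) (min δ 1) (by positivity) (by positivity) (by positivity)
      (by positivity) ?_
    intro r hr hrδ
    set S := kset (γ 0 0 / γ 0 2) (γ 0 1 / γ 0 2) (γ 0 2) r with hS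
    set f : E3 → ℝ := (kbox (1 + 2 * K) r).indicator fun _ => 1 with hf
    have hcp := isCompact_kbox (1 + 2 * K) r
    have hb := hbound f (measurable_const.indicator hcp.measurableSet)
      (HasCompactSupport.of_support_subset_isCompact hcp (by simp [hf]))
      ⟨1, fun x => by
        by_cases hx : x ∈ kbox (1 + 2 * K) r
        · simp [hf, hx]
        · simp [hf, hx]⟩
    have hlow : eLpNorm (S.indicator fun _ => χ 0 / 2 * r) q volume
        ≤ eLpNorm (maxOp γ χ f) q volume := by
      apply eLpNorm_mono
      intro x
      by_cases hx : x ∈ S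
      · rw [indicator_of_mem hx, Real.norm_eq_abs, abs_of_nonneg (by positivity)]
        refine le_trans ?_ (le_abs_self _)
        exact knapp_lower γ hγ.continuous χ hχc hχpos hχsupp K hK hT hγ30 (χ 0 / 2) r hr
          (hrδ.trans (min_le_right _ _))
          (fun s hs => hδχ s ⟨hs.1, hs.2.trans (hrδ.trans (min_le_left _ _))⟩) x hx
      · rw [indicator_of_notMem hx]; simp
    have hvS : volume S = ENNReal.ofReal (4 * γ 0 2 * r ^ 3) := vol_kset hγ30.le hr.le
    have hvB : volume (kbox (1 + 2 * K) r) = ENNReal.ofReal (8 * (1 + 2 * K) ^ 3 * r ^ 6) :=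
      vol_kbox (by positivity) hr.le
    have hall := hlow.trans hb
    rw [hf, eLpNorm_indicator_const' (measurableSet_kset _ _ _ _)
        (by rw [hvS]; exact (ENNReal.ofReal_pos.2 (by positivity)).ne') hq0,
      eLpNorm_indicator_const' hcp.measurableSet
        (by rw [hvB]; exact (ENNReal.ofReal_pos.2 (by positivity)).ne') hp0, hvS, hvB,
      ENNReal.ofReal_rpow_of_pos (by positivity), ENNReal.ofReal_rpow_of_pos (by positivity),
      Real.enorm_of_nonneg (by positivity), Real.enorm_of_nonneg (by positivity),
      ENNReal.ofReal_one, one_mul, ← ENNReal.ofReal_mul (by positivity),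
      ← ENNReal.ofReal_mul' (by positivity)] at hall
    have h3 := ENNReal.ofReal_le_ofReal_iff'.1 hall
    rcases h3 with h3 | h3
    · refine h3.trans ?_
      gcongr
      exact le_max_left _ _
    · exact h3.trans (by positivity)
  have conv : ∀ (k : ℝ) (u : ℝ≥0∞), 0 ≤ k → 1 ≤ u →
      ENNReal.ofReal k / u = ENNReal.ofReal (k * (1 / u.toReal)) := by
    intro k u hk hu
    rcases eq_or_ne u ⊤ with rfl | hut
    · simp
    have hu0 : 0 < u.toReal := ENNReal.toReal_pos (zero_lt_one.trans_le hu).ne' hut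
    rw [mul_one_div, ENNReal.ofReal_div_of_pos hu0, ENNReal.ofReal_toReal hut]
  have c6 := conv 6 p (by norm_num) hp
  have c3 := conv 3 q (by norm_num) hq
  norm_num only [ENNReal.ofReal_ofNat] at c6 c3
  rw [c6, c3, ← ENNReal.ofReal_one, ← ENNReal.ofReal_add zero_le_one (by positivity)]
  apply ENNReal.ofReal_le_ofReal
  simpa using hreal
end
end

section
/- Let γ : I → ℝ³ be a smooth non-degenerate curve and let χ ∈ C^∞(ℝ) be non-negative, supported in the interior of I, with ∫_ℝ χ(s) ds > 0. Let 1 ≤ p, q ≤ ∞. If there exists a constant C such that ‖M_γ f‖_{L^q(ℝ³)} ≤ C ‖f‖_{L^p(ℝ³)} for all bounded, compactly supported measurable functions f on ℝ³, then 2/p ≤ 3/q. -/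
open MeasureTheory Real Set
open scoped ENNReal ContDiff

noncomputable section

lemma aux_volume (γ : ℝ → E3) (L : ℝ) (hL : 0 ≤ L)
    (hlip : ∀ s ∈ I1, ∀ t ∈ I1, dist (γ s) (γ t) ≤ L * |s - t|) (hcont : Continuous γ)
    (n : ℕ) (hn : 1 ≤ n) :
    volume (Metric.cthickening (1 / (n:ℝ)) ((fun s => -γ s) '' I1)) ≤
      ENNReal.ofReal (3 * (L + 1) ^ 3 / (n:ℝ)^2) * volume (Metric.closedBall (0:E3) 1) := by
  have hn0 : (0:ℝ) < n := by exact_mod_cast hn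
  have hn1 : (1:ℝ) ≤ n := by exact_mod_cast hn
  have hK : IsCompact ((fun s => -γ s) '' I1) := isCompact_Icc.image hcont.neg
  have hcov : Metric.cthickening (1 / (n:ℝ)) ((fun s => -γ s) '' I1) ⊆
      ⋃ i ∈ Finset.range (2 * n + 1),
        Metric.closedBall (-γ (-1 + (i:ℝ) / n)) ((L + 1) / n) := by
    rw [hK.cthickening_eq_biUnion_closedBall (by positivity)]
    intro x hx
    simp only [mem_iUnion, exists_prop, mem_image] at hx
    obtain ⟨_, ⟨s, hs, rfl⟩, hx⟩ := hx
    have hs1 : -1 ≤ s := hs.1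
    have hs2 : s ≤ 1 := hs.2
    have h0 : 0 ≤ (s + 1) * n := mul_nonneg (by linarith) hn0.le
    have hf1 := Nat.floor_le h0
    have hf2 := Nat.lt_floor_add_one ((s + 1) * n)
    set i := ⌊(s + 1) * n⌋₊ with hi
    have hi2 : (i:ℝ) ≤ 2 * n := by nlinarith
    have hq1 : (i:ℝ) / n ≤ s + 1 := by rw [div_le_iff₀ hn0]; exact hf1
    have hq2 : s + 1 ≤ (i:ℝ) / n + 1 / n := by
      rw [← add_div, le_div_iff₀ hn0]; exact hf2.le
    have hq0 : 0 ≤ (i:ℝ) / n := by positivity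
    simp only [mem_iUnion, exists_prop, Finset.mem_range]
    refine ⟨i, ?_, ?_⟩
    · have : i ≤ 2 * n := by exact_mod_cast hi2
      omega
    · have hd := hlip s hs (-1 + (i:ℝ)/n) ⟨by linarith, by linarith⟩
      have habs : |s - (-1 + (i:ℝ)/n)| ≤ 1 / n := by
        rw [abs_le]; constructor
        · have : 0 ≤ 1 / (n:ℝ) := by positivity
          linarith
        · linarith
      rw [Metric.mem_closedBall] at hx ⊢
      calc dist x (-γ (-1 + (i:ℝ)/n)) ≤ dist x (-γ s) + dist (-γ s) (-γ (-1 + (i:ℝ)/n)) :=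
            dist_triangle _ _ _
        _ ≤ 1 / n + L * (1 / n) := by
            rw [dist_neg_neg]
            exact add_le_add hx (hd.trans (mul_le_mul_of_nonneg_left habs hL))
        _ = (L + 1) / n := by ring
  refine (measure_mono hcov).trans ((measure_biUnion_finset_le _ _).trans ?_)
  have hfr : Module.finrank ℝ E3 = 3 := by simp [E3]
  have hr : 0 ≤ (L + 1) / (n:ℝ) := by positivity
  simp only [Measure.addHaar_closedBall' volume _ hr, hfr, Finset.sum_const, Finset.card_range,
    nsmul_eq_mul]
  rw [← mul_assoc]
  gcongr
  rw [← ENNReal.ofReal_natCast, ← ENNReal.ofReal_mul (by positivity)]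
  apply ENNReal.ofReal_le_ofReal
  push_cast
  rw [div_pow, mul_div_assoc', div_le_div_iff₀ (by positivity) (by positivity)]
  have : 0 ≤ (L + 1) ^ 3 * (n:ℝ)^2 := by positivity
  nlinarith

lemma aux_asymp (a b c d : ℝ) (hc : 0 < c)
    (h : ∀ n : ℕ, 1 ≤ n → c * ((1 / (n:ℝ)) ^ 3) ^ a ≤ d * (1 / (n:ℝ) ^ 2) ^ b) :
    2 * b ≤ 3 * a := by
  by_contra! hlt
  have ht := (tendsto_rpow_atTop (sub_pos.2 hlt)).comp (tendsto_natCast_atTop_atTop (R := ℝ))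
  obtain ⟨n, hn, hn1⟩ := ((ht.eventually_gt_atTop (d / c)).and (Filter.eventually_ge_atTop 1)).exists
  have hn0 : (0:ℝ) < n := by exact_mod_cast hn1
  have h1 := h n hn1
  have e1 : ((1 / (n:ℝ)) ^ 3) ^ a = (n:ℝ) ^ (-(3 * a)) := by
    rw [one_div, inv_pow, Real.inv_rpow (by positivity), Real.rpow_neg hn0.le,
      Real.rpow_mul hn0.le]
    norm_cast
  have e2 : (1 / (n:ℝ) ^ 2) ^ b = (n:ℝ) ^ (-(2 * b)) := by
    rw [one_div, Real.inv_rpow (by positivity), Real.rpow_neg hn0.le,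
      Real.rpow_mul hn0.le]
    norm_cast
  rw [e1, e2] at h1
  have hpos : 0 < (n:ℝ) ^ (2 * b) := Real.rpow_pos_of_pos hn0 _
  have h2 := mul_le_mul_of_nonneg_right h1 hpos.le
  rw [mul_assoc, mul_assoc, ← Real.rpow_add hn0, ← Real.rpow_add hn0] at h2
  have e3 : -(3 * a) + 2 * b = 2 * b - 3 * a := by ring
  rw [e3, neg_add_cancel, Real.rpow_zero, mul_one] at h2
  simp only [Function.comp] at hn
  rw [div_lt_iff₀ hc] at hn
  linarith

/-- the dimensional necessary condition `2/p ≤ 3/q`. -/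
theorem dimensional_necessary_condition
    (γ : ℝ → E3) (hγ : ContDiff ℝ (⊤ : ℕ∞) γ)
    (c₀ : ℝ) (hc₀ : 0 < c₀)
    (hnondeg : ∀ s ∈ I1,
      c₀ ≤ |det3 (iteratedDeriv 1 γ s) (iteratedDeriv 2 γ s) (iteratedDeriv 3 γ s)|)
    (χ : ℝ → ℝ) (hχsm : ContDiff ℝ (⊤ : ℕ∞) χ) (hχpos : ∀ s, 0 ≤ χ s)
    (hχsupp : Function.support χ ⊆ Set.Ioo (-1 : ℝ) 1)
    (hχint : 0 < ∫ s : ℝ, χ s)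
    (p q : ℝ≥0∞) (hp : 1 ≤ p) (hq : 1 ≤ q)
    (C : ℝ) (hbound : ∀ f : E3 → ℝ, Measurable f → HasCompactSupport f →
      (∃ B : ℝ, ∀ x, |f x| ≤ B) →
      eLpNorm (maxOp γ χ f) q volume ≤ ENNReal.ofReal C * eLpNorm f p volume) :
    2 / p ≤ 3 / q := by
  have hχc : HasCompactSupport χ :=
    HasCompactSupport.of_support_subset_isCompact (isCompact_Icc (a := (-1:ℝ)) (b := 1))
      (hχsupp.trans Ioo_subset_Icc_self)
  have hχi : Integrable χ := hχsm.continuous.integrable_of_hasCompactSupport hχc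
  obtain ⟨L, hL⟩ := ((hγ.of_le (by exact_mod_cast le_top) : ContDiff ℝ 1 γ).locallyLipschitz.locallyLipschitzOn
    (s := I1)).exists_lipschitzOnWith_of_compact isCompact_Icc
  have hlip : ∀ s ∈ I1, ∀ t ∈ I1, dist (γ s) (γ t) ≤ (L:ℝ) * |s - t| := by
    intro s hs t ht
    simpa [Real.dist_eq] using hL.dist_le_mul s hs t ht
  rcases eq_or_ne p ⊤ with rfl | hpt
  · simp
  have hp0 : p ≠ 0 := (zero_lt_one.trans_le hp).ne'
  have hq0 : q ≠ 0 := (zero_lt_one.trans_le hq).ne'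
  set c := ∫ s, χ s with hc
  set v := volume (Metric.closedBall (0:E3) 1) with hv
  have hv0 : v ≠ 0 := (Metric.measure_closedBall_pos _ _ one_pos).ne'
  have hvt : v ≠ ⊤ := measure_closedBall_lt_top.ne
  have hfr : Module.finrank ℝ E3 = 3 := by simp [E3]
  have key : ∀ n : ℕ, 1 ≤ n →
      ENNReal.ofReal c * (ENNReal.ofReal ((1 / (n:ℝ)) ^ 3) * v) ^ (1 / q.toReal) ≤
      ENNReal.ofReal C * (ENNReal.ofReal (3 * ((L:ℝ) + 1) ^ 3 / (n:ℝ)^2) * v) ^ (1 / p.toReal) := by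
    intro n hn
    have hn0 : (0:ℝ) < n := by exact_mod_cast hn
    set S := Metric.cthickening (1 / (n:ℝ)) ((fun s => -γ s) '' I1) with hS
    have hSc : IsCompact S := (isCompact_Icc.image hγ.continuous.neg).cthickening
    have hSm : MeasurableSet S := hSc.measurableSet
    set f : E3 → ℝ := S.indicator (fun _ => 1) with hf
    have hf0 : ∀ x, 0 ≤ f x := fun x => indicator_nonneg (fun _ _ => zero_le_one) x
    have hf1 : ∀ x, f x ≤ 1 := fun x => indicator_le_self' (fun _ _ => zero_le_one) x
    have hfm : Measurable f := measurable_const.indicator hSm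
    have hfc : HasCompactSupport f :=
      HasCompactSupport.of_support_subset_isCompact hSc support_indicator_subset
    have hb := hbound f hfm hfc ⟨1, fun x => by rw [abs_of_nonneg (hf0 x)]; exact hf1 x⟩
    have hav : ∀ t x, |avgOp γ χ t f x| ≤ c := by
      intro t x
      rw [avgOp, abs_of_nonneg (integral_nonneg fun s => mul_nonneg (hf0 _) (hχpos s))]
      exact integral_mono_of_nonneg (ae_of_all _ fun s => mul_nonneg (hf0 _) (hχpos s)) hχi
        (ae_of_all _ fun s => mul_le_of_le_one_left (hχpos s) (hf1 _))
    have hlow : ∀ x ∈ Metric.closedBall (0:E3) (1 / (n:ℝ)), c ≤ maxOp γ χ f x := by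
      intro x hx
      have h1 : avgOp γ χ 1 f x = c := by
        rw [avgOp, hc]
        congr 1
        ext s
        by_cases hs : χ s = 0
        · simp [hs]
        · have hs' : s ∈ I1 := Ioo_subset_Icc_self (hχsupp hs)
          have : x - (1:ℝ) • γ s ∈ S := by
            refine Metric.mem_cthickening_of_dist_le _ (-γ s) _ _ ⟨s, hs', rfl⟩ ?_
            rw [Metric.mem_closedBall, dist_zero_right] at hx
            simpa [dist_eq_norm] using hx
          rw [hf, indicator_of_mem this, one_mul]
      have h2 := le_ciSup (f := fun t : Set.Icc (1:ℝ) 2 => |avgOp γ χ t f x|)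
        ⟨c, by rintro _ ⟨t, rfl⟩; exact hav t x⟩ ⟨1, by norm_num, by norm_num⟩
      simp only [h1] at h2
      exact (le_abs_self c).trans h2
    have hmono : eLpNorm ((Metric.closedBall (0:E3) (1 / (n:ℝ))).indicator (fun _ => c)) q volume
        ≤ eLpNorm (maxOp γ χ f) q volume := by
      apply eLpNorm_mono
      intro x
      by_cases hx : x ∈ Metric.closedBall (0:E3) (1 / (n:ℝ))
      · rw [indicator_of_mem hx, Real.norm_eq_abs, Real.norm_eq_abs, abs_of_pos hχint]
        exact (hlow x hx).trans (le_abs_self _)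
      · rw [indicator_of_notMem hx, norm_zero]
        exact norm_nonneg _
    rw [eLpNorm_indicator_const' measurableSet_closedBall
      (Metric.measure_closedBall_pos _ _ (by positivity)).ne' hq0,
      Measure.addHaar_closedBall' volume _ (by positivity), hfr,
      Real.enorm_eq_ofReal hχint.le] at hmono
    refine hmono.trans (hb.trans ?_)
    gcongr
    rw [hf, eLpNorm_indicator_const hSm hp0 hpt, enorm_one, one_mul]
    exact ENNReal.rpow_le_rpow (aux_volume γ L L.2 hlip hγ.continuous n hn) (by positivity)
  have hvr : 0 < v.toReal := ENNReal.toReal_pos hv0 hvt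
  have hreal := aux_asymp (1 / q.toReal) (1 / p.toReal) (c * v.toReal ^ (1 / q.toReal))
    (max C 0 * (3 * ((L:ℝ) + 1) ^ 3 * v.toReal) ^ (1 / p.toReal)) (by positivity) (by
      intro n hn
      have hn0 : (0:ℝ) < n := by exact_mod_cast hn
      have h := ENNReal.toReal_mono (by finiteness) (key n hn)
      have hL0 : (0:ℝ) ≤ L := L.2
      simp only [ENNReal.toReal_mul, ← ENNReal.toReal_rpow, ENNReal.toReal_ofReal'] at h
      rw [max_eq_left hχint.le, max_eq_left (by positivity : 0 ≤ (1 / (n:ℝ)) ^ 3),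
        max_eq_left (by positivity : 0 ≤ 3 * ((L:ℝ) + 1) ^ 3 / (n:ℝ)^2),
        Real.mul_rpow (by positivity) hvr.le] at h
      calc _ = c * (((1 / (n:ℝ)) ^ 3) ^ (1 / q.toReal) * v.toReal ^ (1 / q.toReal)) := by ring
        _ ≤ _ := h
        _ = _ := by
          rw [mul_assoc, ← Real.mul_rpow (by positivity) (by positivity)]
          congr 2
          ring)
  have hpr : 0 < p.toReal := ENNReal.toReal_pos hp0 hpt
  rcases eq_or_ne q ⊤ with rfl | hqt
  · simp at hreal
    linarith [inv_pos.2 hpr]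
  have hqr : 0 < q.toReal := ENNReal.toReal_pos hq0 hqt
  rw [← ENNReal.toReal_le_toReal (by finiteness) (by finiteness), ENNReal.toReal_div,
    ENNReal.toReal_div]
  simp only [ENNReal.toReal_ofNat]
  rw [div_eq_mul_one_div, div_eq_mul_one_div 3]
  exact hreal
end
end
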